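/- arXiv:1608.00510 — 2 statements merged into one kernel-verified Lean document; each statement's English description precedes it below -/
import Mathlib

section
/- Let F be a field, n ≥ 1, and let g be an element of the symplectic group Sp(2n, F) which, as a matrix, is monomial and whose permutation σ is a (2n)-cycle on the 2n indices. Then g^{2n} = −1. Moreover, if char F ≠ 2, the order of g equals 4n, while σ has order 2n. -/
open Matrix

/-- A matrix is monomial with permutation `σ` if its nonzero entries are exactly the
entries `(σ j, j)`, each of which is a unit. -/
def IsMonomial {n : Type*} [Fintype n] [DecidableEq n] {F : Type*} [Field F]
    (g : Matrix n n F) (σ : Equiv.Perm n) : Prop :=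
  ∃ c : n → Fˣ, ∀ i j, g i j = if i = σ j then (c j : F) else 0

/-!
If `g` is monomial with weights `c` and its permutation is a cycle on all `N` indices, then going
once around the cycle multiplies every basis vector by the product of all the weights, so `g ^ N` is
the scalar matrix `∏ j, c j = sign σ * det g`. For `N` even and `det g = 1` this scalar is `-1`.
No smaller positive power of `g` is diagonal, so the order of `g` is `N` times that of the
scalar.
-/

section Cycle

variable {ι : Type*} {σ : Equiv.Perm ι}

theorem prod_range_card_pow_apply_of_isCycleOn {M : Type*} [CommMonoid M] {s : Finset ι}
    (hσ : σ.IsCycleOn s) {a : ι} (ha : a ∈ s) (f : ι → M) :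
    ∏ t ∈ Finset.range s.card, f ((σ ^ t) a) = ∏ i ∈ s, f i := by
  refine Finset.prod_nbij (fun t ↦ (σ ^ t) a) (fun t _ ↦ ?_) (fun t ht u hu htu ↦ ?_)
    (fun b hb ↦ ?_) fun _ _ ↦ rfl
  · exact (hσ.1.perm_pow t).mapsTo ha
  · exact ((hσ.pow_apply_eq_pow_apply ha).1 htu).eq_of_lt_of_lt
      (Finset.mem_range.1 ht) (Finset.mem_range.1 hu)
  · obtain ⟨t, ht, rfl⟩ := hσ.exists_pow_eq ha hb
    exact ⟨t, Finset.mem_coe.2 (Finset.mem_range.2 ht), rfl⟩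

variable [Fintype ι]

theorem pow_apply_eq_self_iff_card_dvd (hσ : σ.IsCycleOn Set.univ) (j : ι) {k : ℕ} :
    (σ ^ k) j = j ↔ Fintype.card ι ∣ k := by
  rw [← Finset.coe_univ] at hσ
  exact hσ.pow_apply_eq (Finset.mem_univ j)

theorem pow_card_eq_one_of_isCycleOn_univ (hσ : σ.IsCycleOn Set.univ) :
    σ ^ Fintype.card ι = 1 :=
  Equiv.ext fun j ↦ (pow_apply_eq_self_iff_card_dvd hσ j).2 dvd_rfl

theorem orderOf_eq_card_of_isCycleOn_univ [Nonempty ι] (hσ : σ.IsCycleOn Set.univ) :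
    orderOf σ = Fintype.card ι := by
  refine Nat.dvd_antisymm (orderOf_dvd_of_pow_eq_one (pow_card_eq_one_of_isCycleOn_univ hσ)) ?_
  rw [← pow_apply_eq_self_iff_card_dvd hσ (Classical.arbitrary ι), pow_orderOf_eq_one,
    Equiv.Perm.one_apply]

theorem sign_of_isCycleOn_univ [DecidableEq ι] [Nonempty ι] (hσ : σ.IsCycleOn Set.univ) :
    σ.sign = -(-1) ^ Fintype.card ι := by
  rcases subsingleton_or_nontrivial ι with _ | _
  · have hone : Fintype.card ι = 1 :=
      le_antisymm (Fintype.card_le_one_iff_subsingleton.2 ‹_›) Fintype.card_pos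
    simp [Subsingleton.elim σ 1, hone]
  · have hcycle : σ.IsCycle :=
      Equiv.Perm.isCycle_iff_exists_isCycleOn.2
        ⟨Set.univ, Set.nontrivial_univ, hσ, fun _ _ ↦ Set.mem_univ _⟩
    rw [hcycle.sign, ← hcycle.orderOf, orderOf_eq_card_of_isCycleOn_univ hσ]

end Cycle

section Monomial

variable {ι R : Type*} [DecidableEq ι]

/-- The monomial matrix with permutation `σ` and weights `c`, sending the basis vector `e j` to
`c j • e (σ j)`. The weights need not be units, unlike in `IsMonomial`. -/
def monomialMatrix [Zero R] (σ : Equiv.Perm ι) (c : ι → R) : Matrix ι ι R :=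
  of fun i j ↦ if i = σ j then c j else 0

theorem monomialMatrix_apply [Zero R] (σ : Equiv.Perm ι) (c : ι → R) (i j : ι) :
    monomialMatrix σ c i j = if i = σ j then c j else 0 :=
  rfl

theorem monomialMatrix_one [Zero R] (c : ι → R) : monomialMatrix 1 c = diagonal c := by
  ext i j
  by_cases h : i = j <;> simp [monomialMatrix_apply, h]

theorem eq_one_of_monomialMatrix_eq_one [Zero R] [One R] [NeZero (1 : R)] {σ : Equiv.Perm ι}
    {c : ι → R} (h : monomialMatrix σ c = 1) : σ = 1 := by
  refine Equiv.ext fun j ↦ of_not_not fun hj : σ j ≠ j ↦ ?_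
  have hentry : monomialMatrix σ c j j = 1 := by rw [h, one_apply_eq]
  rw [monomialMatrix_apply, if_neg hj.symm] at hentry
  exact zero_ne_one hentry

variable [Fintype ι]

theorem IsMonomial.exists_eq_monomialMatrix [Field R] {g : Matrix ι ι R} {σ : Equiv.Perm ι}
    (hg : IsMonomial g σ) : ∃ c : ι → R, g = monomialMatrix σ c := by
  obtain ⟨c, hc⟩ := hg
  exact ⟨fun j ↦ c j, Matrix.ext hc⟩

theorem monomialMatrix_mul [NonUnitalNonAssocSemiring R] (σ τ : Equiv.Perm ι) (c d : ι → R) :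
    monomialMatrix σ c * monomialMatrix τ d = monomialMatrix (σ * τ) fun j ↦ c (τ j) * d j := by
  ext i j
  by_cases h : i = σ (τ j) <;> simp [Matrix.mul_apply, monomialMatrix_apply, h]

theorem det_monomialMatrix [CommRing R] (σ : Equiv.Perm ι) (c : ι → R) :
    (monomialMatrix σ c).det = σ.sign * ∏ j, c j := by
  have hfactor : monomialMatrix σ c = monomialMatrix σ 1 * diagonal c := by
    simp [← monomialMatrix_one, monomialMatrix_mul]
  have hperm : monomialMatrix σ (1 : ι → R) = (1 : Matrix ι ι R).submatrix id σ := by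
    ext i j
    simp [monomialMatrix_apply, Matrix.one_apply]
  rw [hfactor, det_mul, det_diagonal, hperm, det_permute', det_one, mul_one]

variable [CommSemiring R] {σ : Equiv.Perm ι}

theorem monomialMatrix_pow (σ : Equiv.Perm ι) (c : ι → R) (k : ℕ) :
    monomialMatrix σ c ^ k =
      monomialMatrix (σ ^ k) fun j ↦ ∏ t ∈ Finset.range k, c ((σ ^ t) j) := by
  induction k with
  | zero => simp [monomialMatrix_one]
  | succ k ih =>
    simp only [pow_succ', ih, monomialMatrix_mul, Finset.prod_range_succ, mul_comm]

theorem monomialMatrix_pow_card (hσ : σ.IsCycleOn Set.univ) (c : ι → R) :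
    monomialMatrix σ c ^ Fintype.card ι = scalar ι (∏ j, c j) := by
  rw [monomialMatrix_pow, pow_card_eq_one_of_isCycleOn_univ hσ, monomialMatrix_one, scalar_apply]
  rw [← Finset.coe_univ] at hσ
  exact congrArg diagonal <| funext fun j ↦
    prod_range_card_pow_apply_of_isCycleOn hσ (Finset.mem_univ j) c

theorem orderOf_dvd_orderOf_monomialMatrix [Nontrivial R] (σ : Equiv.Perm ι) (c : ι → R) :
    orderOf σ ∣ orderOf (monomialMatrix σ c) :=
  orderOf_dvd_of_pow_eq_one <| eq_one_of_monomialMatrix_eq_one <|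
    (monomialMatrix_pow σ c _).symm.trans (pow_orderOf_eq_one _)

theorem orderOf_monomialMatrix [Nontrivial R] [Nonempty ι] (hσ : σ.IsCycleOn Set.univ)
    (c : ι → R) :
    orderOf (monomialMatrix σ c) = Fintype.card ι * orderOf (∏ j, c j) := by
  have hdvd : Fintype.card ι ∣ orderOf (monomialMatrix σ c) :=
    orderOf_eq_card_of_isCycleOn_univ hσ ▸ orderOf_dvd_orderOf_monomialMatrix σ c
  have hscalar : Function.Injective (scalar ι : R →+* Matrix ι ι R) := fun _ _ ↦ scalar_inj.1
  have hpow : orderOf (monomialMatrix σ c ^ Fintype.card ι) = orderOf (∏ j, c j) := by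
    rw [monomialMatrix_pow_card hσ]
    exact orderOf_injective (scalar ι : R →+* Matrix ι ι R).toMonoidHom hscalar _
  rw [← hpow, orderOf_pow_of_dvd Fintype.card_ne_zero hdvd, Nat.mul_div_cancel' hdvd]

end Monomial

theorem prod_eq_neg_one_of_det_monomialMatrix_eq_one {ι R : Type*} [Fintype ι] [DecidableEq ι]
    [Nonempty ι] [CommRing R] {σ : Equiv.Perm ι} (hσ : σ.IsCycleOn Set.univ)
    (heven : Even (Fintype.card ι)) {c : ι → R} (hdet : (monomialMatrix σ c).det = 1) :
    ∏ j, c j = -1 := by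
  rw [det_monomialMatrix, sign_of_isCycleOn_univ hσ, heven.neg_one_pow] at hdet
  simpa [neg_eq_iff_eq_neg] using hdet

theorem stmt_6_general {ι R : Type*} [Fintype ι] [DecidableEq ι] [Nonempty ι] [CommRing R]
    [Nontrivial R] {σ : Equiv.Perm ι} (hσ : σ.IsCycleOn Set.univ)
    (heven : Even (Fintype.card ι)) {c : ι → R} (hdet : (monomialMatrix σ c).det = 1) :
    monomialMatrix σ c ^ Fintype.card ι = -1 ∧
      (ringChar R ≠ 2 → orderOf (monomialMatrix σ c) = 2 * Fintype.card ι) ∧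
      orderOf σ = Fintype.card ι := by
  have hprod : ∏ j, c j = -1 := prod_eq_neg_one_of_det_monomialMatrix_eq_one hσ heven hdet
  refine ⟨?_, fun hchar ↦ ?_, orderOf_eq_card_of_isCycleOn_univ hσ⟩
  · rw [monomialMatrix_pow_card hσ, hprod, map_neg, map_one]
  · rw [orderOf_monomialMatrix hσ, hprod, orderOf_neg_one, if_neg hchar, mul_comm]

/-- A monomial symplectic matrix whose permutation is a `2n`-cycle satisfies
`g ^ (2n) = -1`; if `char F ≠ 2` then `g` has order `4n` while `σ` has order `2n`. -/
theorem stmt_6 (F : Type*) [Field F] (n : ℕ) (hn : 1 ≤ n)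
    (g : Matrix.symplecticGroup (Fin n) F) (σ : Equiv.Perm (Fin n ⊕ Fin n))
    (hmon : IsMonomial (g : Matrix (Fin n ⊕ Fin n) (Fin n ⊕ Fin n) F) σ)
    (hcyc : σ.IsCycleOn Set.univ) :
    (↑(g ^ (2 * n)) : Matrix (Fin n ⊕ Fin n) (Fin n ⊕ Fin n) F) = -1 ∧
      (ringChar F ≠ 2 → orderOf g = 4 * n ∧ orderOf σ = 2 * n) := by
  have hcard : Fintype.card (Fin n ⊕ Fin n) = 2 * n := by simp [two_mul]
  have : Nonempty (Fin n ⊕ Fin n) := ⟨Sum.inl ⟨0, hn⟩⟩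
  obtain ⟨c, hc⟩ := hmon.exists_eq_monomialMatrix
  obtain ⟨hpow, horder, hσ⟩ := stmt_6_general hcyc (hcard ▸ even_two_mul n)
    (hc ▸ SymplecticGroup.det_eq_one g.2)
  rw [← hc, hcard] at hpow horder
  rw [orderOf_submonoid, ← mul_assoc] at horder
  exact ⟨hpow, fun hchar ↦ ⟨horder hchar, hσ.trans hcard⟩⟩
end

section
/- Let F be a field with char F ≠ 2 and n ≥ 1. Let g ∈ Sp(2n, F) be a monomial matrix with permutation σ, and suppose every orbit of σ on the 2n indices is invariant under the involution τ exchanging i and i + n (indices taken mod 2n, i.e. τ swaps the two blocks of the symplectic basis). Then g^{k} ≠ 1 where k is the order of σ; in fact the order of g equals 2k. -/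
open Matrix

/-!
Suppose `σ ^ m` sends `i` to its dual index `τ i`. Then `g ^ m` swaps the lines spanned by a dual
pair of basis vectors, and a symplectic map doing so squares to `-1` on them; thus `g ^ (2 * m)`
has the diagonal entry `-1` at `i`. To apply this with `2 * m = k`, the order of `σ`, take any `i`
that `σ ^ m` moves: both `τ` and `σ ^ m` turn the cycle of `i` by half its length, so they agree
at `i`. Hence `g ^ k ≠ 1`.

On the other hand `g ^ k` is diagonal and commutes with `g`, so it is constant along the orbits
of `σ`. Its entries at `i` and `τ i` are therefore equal, while their product is `1` because
`g ^ k` is symplectic. Hence `g ^ (2 * k) = 1`.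
-/

section HalfPeriod

variable {α : Type*}

/-- `m` is a half period of `f` at `x` if `x` returns to itself after `2 * m` steps but not after
`m` steps, i.e. if `f^[m]` turns the cycle of `x` by half its length. No minimality is required, so
all odd multiples of a half period are half periods. -/
def IsHalfPeriod (f : α → α) (m : ℕ) (x : α) : Prop :=
  Function.IsPeriodicPt f (2 * m) x ∧ ¬Function.IsPeriodicPt f m x

theorem two_mul_mod_eq_of_dvd_two_mul {p a : ℕ} (h : p ∣ 2 * a) (ha : ¬p ∣ a) :
    2 * (a % p) = p := by
  have hp : 0 < p := Nat.pos_of_ne_zero fun hp => ha (by simp_all)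
  have hlt : a % p < p := Nat.mod_lt a hp
  have hpos : 0 < a % p := Nat.pos_of_ne_zero (mt Nat.dvd_of_mod_eq_zero ha)
  obtain ⟨q, hq⟩ : p ∣ 2 * (a % p) :=
    (((Nat.mod_modEq a p).mul_left 2).dvd_iff dvd_rfl).mpr h
  have hq_one : q = 1 := by nlinarith
  rw [hq, hq_one, mul_one]

theorem IsHalfPeriod.two_mul_mod_minimalPeriod {f : α → α} {x : α} {a : ℕ}
    (ha : IsHalfPeriod f a x) :
    2 * (a % Function.minimalPeriod f x) = Function.minimalPeriod f x :=
  two_mul_mod_eq_of_dvd_two_mul ha.1.minimalPeriod_dvd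
    (mt Function.isPeriodicPt_iff_minimalPeriod_dvd.mpr ha.2)

theorem IsHalfPeriod.iterate_eq_iterate {f : α → α} {x : α} {a b : ℕ}
    (ha : IsHalfPeriod f a x) (hb : IsHalfPeriod f b x) : f^[a] x = f^[b] x := by
  have hmod : a % Function.minimalPeriod f x = b % Function.minimalPeriod f x := by
    linarith [ha.two_mul_mod_minimalPeriod, hb.two_mul_mod_minimalPeriod]
  rw [← Function.iterate_mod_minimalPeriod_eq, hmod, Function.iterate_mod_minimalPeriod_eq]

variable {σ τ : Equiv.Perm α}

theorem isPeriodicPt_perm_iff {i : α} {m : ℕ} :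
    Function.IsPeriodicPt σ m i ↔ (σ ^ m) i = i := by
  rw [Function.IsPeriodicPt, Function.IsFixedPt, Equiv.Perm.iterate_eq_pow]

theorem isHalfPeriod_perm_iff {i : α} {m : ℕ} :
    IsHalfPeriod σ m i ↔ (σ ^ (2 * m)) i = i ∧ (σ ^ m) i ≠ i := by
  rw [IsHalfPeriod, isPeriodicPt_perm_iff, isPeriodicPt_perm_iff]

theorem isHalfPeriod_of_pow_apply_eq (hcomm : Commute σ τ) (hinv : Function.Involutive τ) {i : α}
    (hfix : τ i ≠ i) {a : ℕ} (ha : (σ ^ a) i = τ i) : IsHalfPeriod σ a i := by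
  refine isHalfPeriod_perm_iff.mpr ⟨?_, ha ▸ hfix⟩
  calc (σ ^ (2 * a)) i = (σ ^ a * τ) i := by
        rw [two_mul, pow_add, Equiv.Perm.mul_apply, ha, Equiv.Perm.mul_apply]
    _ = (τ * σ ^ a) i := by rw [(hcomm.pow_left a).eq]
    _ = i := by rw [Equiv.Perm.mul_apply, ha, hinv i]

theorem IsHalfPeriod.even_orderOf {a : ℕ} {i : α} (ha : IsHalfPeriod σ a i) :
    Even (orderOf σ) := by
  have hperiod : Function.minimalPeriod σ i ∣ orderOf σ :=
    (isPeriodicPt_perm_iff.mpr (by rw [pow_orderOf_eq_one, Equiv.Perm.one_apply])).minimalPeriod_dvd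
  exact even_iff_two_dvd.mpr ((Dvd.intro _ ha.two_mul_mod_minimalPeriod).trans hperiod)

theorem exists_orderOf_eq_two_mul_and_pow_apply_eq [Finite α] [Nonempty α] (hcomm : Commute σ τ)
    (hinv : Function.Involutive τ) (hfix : ∀ i, τ i ≠ i) (hcycle : ∀ i, σ.SameCycle i (τ i)) :
    ∃ m i, orderOf σ = 2 * m ∧ (σ ^ m) i = τ i := by
  have hτ_half {i : α} {a : ℕ} : (σ ^ a) i = τ i → IsHalfPeriod σ a i :=
    isHalfPeriod_of_pow_apply_eq hcomm hinv (hfix i)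
  obtain ⟨m, hm⟩ : 2 ∣ orderOf σ := by
    obtain ⟨x⟩ := ‹Nonempty α›
    obtain ⟨a, ha⟩ := (hcycle x).exists_nat_pow_eq
    exact (hτ_half ha).even_orderOf.two_dvd
  obtain ⟨i, hi⟩ : ∃ i, (σ ^ m) i ≠ i := by
    have hpos : 0 < orderOf σ := orderOf_pos σ
    have hne : σ ^ m ≠ 1 := pow_ne_one_of_lt_orderOf (by lia) (by lia)
    by_contra! hfixed
    exact hne (Equiv.ext hfixed)
  have hm_half : IsHalfPeriod σ m i := by
    rw [isHalfPeriod_perm_iff, ← hm, pow_orderOf_eq_one]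
    exact ⟨rfl, hi⟩
  obtain ⟨a, ha⟩ := (hcycle i).exists_nat_pow_eq
  refine ⟨m, i, hm, ?_⟩
  rw [← ha, ← Equiv.Perm.iterate_eq_pow, ← Equiv.Perm.iterate_eq_pow]
  exact hm_half.iterate_eq_iterate (hτ_half ha)

end HalfPeriod

theorem J_apply_ne_zero_iff {l R : Type*} [DecidableEq l] [CommRing R] [Nontrivial R]
    {i j : l ⊕ l} : J l R i j ≠ 0 ↔ j = i.swap := by
  rcases i with i | i <;> rcases j with j | j <;> simp [J, Matrix.one_apply, eq_comm]

namespace IsMonomial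

section Monomial

variable {ι : Type*} [Fintype ι] [DecidableEq ι] {F : Type*} [Field F]
  {g h : Matrix ι ι F} {σ π : Equiv.Perm ι}

theorem apply_ne_zero_iff (hg : IsMonomial g σ) {i j : ι} : g i j ≠ 0 ↔ i = σ j := by
  obtain ⟨c, hc⟩ := hg
  simp [hc]

theorem apply_perm_ne_zero (hg : IsMonomial g σ) (j : ι) : g (σ j) j ≠ 0 :=
  hg.apply_ne_zero_iff.mpr rfl

theorem apply_eq_zero (hg : IsMonomial g σ) {i j : ι} (hij : i ≠ σ j) : g i j = 0 :=
  not_not.mp (mt hg.apply_ne_zero_iff.mp hij)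

theorem perm_unique (hσ : IsMonomial g σ) (hπ : IsMonomial g π) : σ = π :=
  Equiv.ext fun j => hπ.apply_ne_zero_iff.mp (hσ.apply_perm_ne_zero j)

theorem mul_apply (hh : IsMonomial h π) (A : Matrix ι ι F) (i j : ι) :
    (A * h) i j = A i (π j) * h (π j) j := by
  rw [Matrix.mul_apply]
  exact Finset.sum_eq_single _ (fun k _ hk => by rw [hh.apply_eq_zero hk, mul_zero]) (by simp)

theorem transpose_mul_mul_apply (hg : IsMonomial g σ) (A : Matrix ι ι F) (i j : ι) :
    (gᵀ * A * g) i j = g (σ i) i * A (σ i) (σ j) * g (σ j) j := by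
  have hleft (k : ι) : (gᵀ * A) i k = g (σ i) i * A (σ i) k := by
    rw [← transpose_apply (gᵀ * A), transpose_mul, transpose_transpose, hg.mul_apply,
      transpose_apply, mul_comm]
  rw [hg.mul_apply, hleft]

theorem one : IsMonomial (1 : Matrix ι ι F) 1 :=
  ⟨1, fun _ _ => Matrix.one_apply⟩

theorem mul (hg : IsMonomial g σ) (hh : IsMonomial h π) : IsMonomial (g * h) (σ * π) := by
  refine ⟨fun j => Units.mk0 (g (σ (π j)) (π j)) (hg.apply_perm_ne_zero _) *
    Units.mk0 (h (π j) j) (hh.apply_perm_ne_zero _), fun i j => ?_⟩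
  rw [hh.mul_apply]
  split_ifs with hij
  · simp [hij]
  · rw [hg.apply_eq_zero hij, zero_mul]

theorem pow (hg : IsMonomial g σ) (m : ℕ) : IsMonomial (g ^ m) (σ ^ m) := by
  induction m with
  | zero => simpa only [pow_zero] using one
  | succ m ih => simpa only [pow_succ] using ih.mul hg

theorem orderOf_perm_dvd (hg : IsMonomial g σ) : orderOf σ ∣ orderOf g := by
  have hpow := hg.pow (orderOf g)
  rw [pow_orderOf_eq_one] at hpow
  exact orderOf_dvd_of_pow_eq_one (hpow.perm_unique one)

theorem isDiag (hg : IsMonomial g 1) : g.IsDiag :=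
  fun _ _ hij => hg.apply_eq_zero hij

theorem apply_self_eq_of_sameCycle (hg : IsMonomial g σ) (hh : h.IsDiag) (hcomm : Commute g h)
    {i j : ι} (hij : σ.SameCycle i j) : h i i = h j j := by
  have hstep (i : ι) : h (σ i) (σ i) = h i i := by
    have hentry : (g * diagonal h.diag) (σ i) i = (diagonal h.diag * g) (σ i) i := by
      rw [hh.diagonal_diag, hcomm.eq]
    rw [mul_diagonal, diagonal_mul, mul_comm] at hentry
    exact (mul_right_cancel₀ (hg.apply_perm_ne_zero i) hentry).symm
  have hpow (a : ℕ) : h ((σ ^ a) i) ((σ ^ a) i) = h i i := by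
    induction a with
    | zero => rw [pow_zero, Equiv.Perm.one_apply]
    | succ a ih => rw [pow_succ', Equiv.Perm.mul_apply, hstep, ih]
  obtain ⟨a, rfl⟩ := hij.exists_nat_pow_eq
  exact (hpow a).symm

end Monomial

section Symplectic

variable {l F : Type*} [DecidableEq l] [Fintype l] [Field F]
  {g : Matrix (l ⊕ l) (l ⊕ l) F} {σ : Equiv.Perm (l ⊕ l)}

theorem mul_J_mul (hg : IsMonomial g σ) (hs : g ∈ symplecticGroup l F) (i j : l ⊕ l) :
    g (σ i) i * J l F (σ i) (σ j) * g (σ j) j = J l F i j := by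
  rw [← hg.transpose_mul_mul_apply, SymplecticGroup.mem_iff'.mp hs]

theorem perm_swap (hg : IsMonomial g σ) (hs : g ∈ symplecticGroup l F) (i : l ⊕ l) :
    σ i.swap = (σ i).swap := by
  have hJ : J l F i i.swap ≠ 0 := J_apply_ne_zero_iff.mpr rfl
  rw [← hg.mul_J_mul hs] at hJ
  exact J_apply_ne_zero_iff.mp (right_ne_zero_of_mul (left_ne_zero_of_mul hJ))

theorem commute_perm_sumComm (hg : IsMonomial g σ) (hs : g ∈ symplecticGroup l F) :
    Commute σ (Equiv.sumComm l l) :=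
  Equiv.ext (hg.perm_swap hs)

theorem apply_mul_apply_swap (hg : IsMonomial g 1) (hs : g ∈ symplecticGroup l F) (i : l ⊕ l) :
    g i i * g i.swap i.swap = 1 := by
  have hJ : J l F i i.swap ≠ 0 := J_apply_ne_zero_iff.mpr rfl
  have hform := hg.mul_J_mul hs i i.swap
  simp only [Equiv.Perm.one_apply] at hform
  exact mul_right_cancel₀ hJ (by linear_combination hform)

theorem sq_apply_self_of_perm_eq_swap (hg : IsMonomial g σ) (hs : g ∈ symplecticGroup l F)
    {i : l ⊕ l} (hi : σ i = i.swap) : (g ^ 2) i i = -1 := by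
  have hJ : J l F i i.swap ≠ 0 := J_apply_ne_zero_iff.mpr rfl
  have hJ_swap : J l F i.swap i = -J l F i i.swap := congrFun₂ (J_transpose l F) i i.swap
  have hi_swap : σ i.swap = i := by rw [hg.perm_swap hs, hi, Sum.swap_swap]
  have hform := hg.mul_J_mul hs i i.swap
  rw [hi, hi_swap, hJ_swap] at hform
  rw [sq, hg.mul_apply, hi]
  exact mul_right_cancel₀ hJ (by linear_combination -hform)

theorem sq_pow_orderOf_perm_eq_one (hg : IsMonomial g σ) (hs : g ∈ symplecticGroup l F)
    (hτ : ∀ i, σ.SameCycle i (Equiv.sumComm l l i)) : (g ^ orderOf σ) ^ 2 = 1 := by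
  set d := g ^ orderOf σ
  have hmon : IsMonomial d 1 := by
    simpa only [pow_orderOf_eq_one] using hg.pow (orderOf σ)
  have hentry (i : l ⊕ l) : d i i ^ 2 = 1 := by
    have hconst : d i i = d i.swap i.swap :=
      hg.apply_self_eq_of_sameCycle hmon.isDiag (Commute.self_pow _ _) (hτ i)
    rw [sq, ← hmon.apply_mul_apply_swap (pow_mem hs _) i, ← hconst]
  rw [← hmon.isDiag.diagonal_diag, diagonal_pow, ← diagonal_one]
  exact congrArg diagonal (funext hentry)

theorem pow_orderOf_perm_ne_one [Nonempty l] (hF : ringChar F ≠ 2) (hg : IsMonomial g σ)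
    (hs : g ∈ symplecticGroup l F) (hτ : ∀ i, σ.SameCycle i (Equiv.sumComm l l i)) :
    g ^ orderOf σ ≠ 1 := by
  have hfix (i : l ⊕ l) : Equiv.sumComm l l i ≠ i := by rcases i with i | i <;> simp
  obtain ⟨m, i, hm, hi⟩ := exists_orderOf_eq_two_mul_and_pow_apply_eq
    (hg.commute_perm_sumComm hs) Sum.swap_swap hfix hτ
  have hneg : (g ^ orderOf σ) i i = -1 := by
    rw [hm, mul_comm, pow_mul]
    exact (hg.pow m).sq_apply_self_of_perm_eq_swap (pow_mem hs m) hi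
  intro hone
  rw [hone, Matrix.one_apply_eq] at hneg
  exact Ring.neg_one_ne_one_of_char_ne_two hF hneg.symm

end Symplectic

end IsMonomial

theorem stmt_10_general {l F : Type*} [DecidableEq l] [Fintype l] [Nonempty l] [Field F]
    (hF : ringChar F ≠ 2) (g : symplecticGroup l F) (σ : Equiv.Perm (l ⊕ l))
    (hmon : IsMonomial (g : Matrix (l ⊕ l) (l ⊕ l) F) σ)
    (hτ : ∀ i : l ⊕ l, σ.SameCycle i (Equiv.sumComm l l i)) :
    g ^ orderOf σ ≠ 1 ∧ orderOf g = 2 * orderOf σ := by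
  have hne : g ^ orderOf σ ≠ 1 := fun h =>
    hmon.pow_orderOf_perm_ne_one hF g.2 hτ (congrArg Subtype.val h)
  have hsq : (g ^ orderOf σ) ^ 2 = 1 := Subtype.ext (hmon.sq_pow_orderOf_perm_eq_one g.2 hτ)
  have hdvd : orderOf σ ∣ orderOf g :=
    orderOf_submonoid g ▸ hmon.orderOf_perm_dvd
  have hquot : orderOf g / orderOf σ = 2 := by
    rw [← orderOf_pow_of_dvd (orderOf_pos σ).ne' hdvd, orderOf_eq_prime hsq hne]
  exact ⟨hne, Nat.eq_mul_of_div_eq_left hdvd hquot⟩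

/-- If `char F ≠ 2` and `g ∈ Sp(2n,F)` is monomial with all permutation orbits invariant
under the swap of the two blocks, then `g ^ k ≠ 1` where `k` is the order of the
permutation; in fact the order of `g` is `2k`. -/
theorem stmt_10 (F : Type*) [Field F] (hF : ringChar F ≠ 2) (n : ℕ) (hn : 1 ≤ n)
    (g : Matrix.symplecticGroup (Fin n) F) (σ : Equiv.Perm (Fin n ⊕ Fin n))
    (hmon : IsMonomial (g : Matrix (Fin n ⊕ Fin n) (Fin n ⊕ Fin n) F) σ)
    (hτ : ∀ i : Fin n ⊕ Fin n, σ.SameCycle i (Equiv.sumComm (Fin n) (Fin n) i)) :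
    g ^ orderOf σ ≠ 1 ∧ orderOf g = 2 * orderOf σ := by
  have : Nonempty (Fin n) := ⟨⟨0, hn⟩⟩
  exact stmt_10_general hF g σ hmon hτ
end
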